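/- Fix 0 < p₀ < p̃₀ < 2 and let (q, p), respectively (q̃, p̃), be the global solution of (HS) with initial datum (0, p₀), respectively (0, p̃₀). Then: (i) if p₀ ∈ (0, √2), then q(t) < q̃(t) for all t ∈ (0, 𝒯(p₀)/2]; (ii) if p₀ ∈ [√2, 2), then q(t) < q̃(t) for all t ∈ (0, +∞). -/

import Mathlib

open Real Set Filter MeasureTheory
open scoped Topology

/-- The potential `g` from the Hamiltonian `H(x,p) = p²/2 + g(x)`. -/
noncomputable def g (x : ℝ) : ℝ := if |x| ≤ 1 then 1 - (1 - x ^ 2) ^ 4 else 1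

/-- The derivative of `g`. -/
noncomputable def g' (x : ℝ) : ℝ := if |x| ≤ 1 then 8 * x * (1 - x ^ 2) ^ 3 else 0

/-- `(q, p)` is a (global) solution of the Hamiltonian system (HS): `q̇ = p`, `ṗ = -g'(q)`. -/
def IsHSSol (q p : ℝ → ℝ) : Prop :=
  (∀ t : ℝ, HasDerivAt q (p t) t) ∧ (∀ t : ℝ, HasDerivAt p (-(g' (q t))) t)

/-- `F` is the flow of (HS): `F t q₀ p₀ = (q t, p t)` for the solution with data `(q₀, p₀)`. -/
def IsHSFlow (F : ℝ → ℝ → ℝ → ℝ × ℝ) : Prop :=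
  ∀ q₀ p₀ : ℝ,
    IsHSSol (fun t => (F t q₀ p₀).1) (fun t => (F t q₀ p₀).2) ∧ F 0 q₀ p₀ = (q₀, p₀)

/-- The set `([0,∞) × {2}) ∪ ({0} × (0,2])`, codomain of the map `Δ`. -/
def Dset : Set (ℝ × ℝ) := (Ici (0:ℝ) ×ˢ ({2} : Set ℝ)) ∪ ({(0:ℝ)} ×ˢ Ioc (0:ℝ) 2)

/-- `T` is the smallest positive period of `q`. -/
def IsSmallestPeriod (q : ℝ → ℝ) (T : ℝ) : Prop :=
  0 < T ∧ Function.Periodic q T ∧ ∀ T' : ℝ, 0 < T' → Function.Periodic q T' → T ≤ T'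

/-- `T` is the period map `𝒯`, assigning to `p₀ ∈ (0, √2)` the smallest positive period of
the `q`-component of the solution of (HS) with initial datum `(0, p₀)`. -/
def IsPeriodMap (F : ℝ → ℝ → ℝ → ℝ × ℝ) (T : ℝ → ℝ) : Prop :=
  ∀ p₀ ∈ Ioo (0:ℝ) (Real.sqrt 2), IsSmallestPeriod (fun t => (F t 0 p₀).1) (T p₀)

/-- `Δ` associates to `(t,x)` the datum in `Dset` whose orbit stays positive on `(0,t)`
and reaches `x` at time `t`. -/
def IsDeltaMap (F : ℝ → ℝ → ℝ → ℝ × ℝ) (Δ : ℝ → ℝ → ℝ × ℝ) : Prop :=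
  ∀ t x : ℝ, 0 < t → 0 < x →
    Δ t x ∈ Dset ∧ (F t (Δ t x).1 (Δ t x).2).1 = x ∧
      ∀ s ∈ Ioo (0:ℝ) t, 0 < (F s (Δ t x).1 (Δ t x).2).1

/-- The solution `u` of the conservation law built from the flow `F` and the map `Δ`
(extended by `0` at `x = 0`). -/
noncomputable def usol (F : ℝ → ℝ → ℝ → ℝ × ℝ) (Δ : ℝ → ℝ → ℝ × ℝ) (t x : ℝ) : ℝ :=
  if 0 < x then (F t (Δ t x).1 (Δ t x).2).2
  else if x < 0 then -(F t (Δ t (-x)).1 (Δ t (-x)).2).2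
  else 0

/-!
The system is Newton's equation `q̈ = -f(q)` with `f = g'`, where `f(x) / x` decreases on
`(0, ∞)`, strictly near `0`. As long as `0 < q < q̃`, the Wronskian `W = q p̃ - q̃ p` has derivative
`q q̃ (f(q) / q - f(q̃) / q̃) ≥ 0`, strictly positive for small `t > 0`, so `W > 0` up to and
including the first contact time. There, however, `q = q̃` and `p̃ ≤ p`, so that `W ≤ 0`.
Hence `q < q̃` persists as long as `q` is positive.

It remains to see how long `q` is positive. If `q` returns to `0` at time `c`, energy conservation
gives `p(c) = -p(0)`, and since `f` is odd, `q` is `c`-antiperiodic; thus `2c` is a period and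
`c ≥ 𝒯/2`. If `p₀ ≥ √2`, the energy is at least `max g`, so a zero of `p` could only occur at a
maximum of `g`, which is an equilibrium; by uniqueness `p` never vanishes and `q` is increasing.
-/

lemma hasDerivAt_max_zero_pow (n : ℕ) (x : ℝ) :
    HasDerivAt (fun y : ℝ => max y 0 ^ (n + 2)) ((n + 2) * max x 0 ^ (n + 1)) x := by
  refine hasDerivAt_of_hasDerivAt_of_ne' (x := 0) (g := fun y => (n + 2) * max y 0 ^ (n + 1))
    (fun y hy => ?_) (by fun_prop) (by fun_prop) x
  rcases hy.lt_or_gt with hneg | hpos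
  · rw [max_eq_right hneg.le, zero_pow n.succ_ne_zero, mul_zero]
    refine (hasDerivAt_const y (0 : ℝ)).congr_of_eventuallyEq ?_
    filter_upwards [Iio_mem_nhds hneg] with z hz
    rw [max_eq_right (le_of_lt hz), zero_pow (n + 1).succ_ne_zero]
  · rw [max_eq_left hpos.le]
    refine ((hasDerivAt_pow (n + 2) y).congr_of_eventuallyEq ?_).congr_deriv (by push_cast; rfl)
    filter_upwards [Ioi_mem_nhds hpos] with z hz
    rw [max_eq_left (le_of_lt hz)]

section FirstZero

variable {f f' : ℝ → ℝ} {a b : ℝ}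

lemma eventually_nhdsGT_pos_of_hasDerivAt_pos {m : ℝ} (hf : HasDerivAt f m a) (ha : f a = 0)
    (hm : 0 < m) : ∀ᶠ t in 𝓝[>] a, 0 < f t := by
  filter_upwards [nhdsWithin_le_nhds
    (eventually_nhdsWithin_sign_eq_of_deriv_pos (hf.deriv.symm ▸ hm) ha), self_mem_nhdsWithin]
    with t hsign hat
  rwa [sign_pos (sub_pos.2 hat), sign_eq_one_iff] at hsign

lemma eventually_nhdsLT_neg_of_hasDerivAt_pos {m : ℝ} (hf : HasDerivAt f m a) (ha : f a = 0)
    (hm : 0 < m) : ∀ᶠ t in 𝓝[<] a, f t < 0 := by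
  filter_upwards [nhdsWithin_le_nhds
    (eventually_nhdsWithin_sign_eq_of_deriv_pos (hf.deriv.symm ▸ hm) ha), self_mem_nhdsWithin]
    with t hsign hta
  rwa [sign_neg (sub_neg.2 hta), sign_eq_neg_one_iff] at hsign

lemma exists_first_zero (hf : ContinuousOn f (Icc a b)) (hab : a < b)
    (ha : ∀ᶠ t in 𝓝[>] a, 0 < f t) (hb : f b ≤ 0) :
    ∃ c ∈ Ioc a b, f c = 0 ∧ ∀ t ∈ Ioo a c, 0 < f t := by
  obtain ⟨u, hau, hu⟩ := mem_nhdsGT_iff_exists_Ioo_subset.1 ha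
  have hub : u ≤ b := not_lt.1 fun hbu => hb.not_gt (hu ⟨hab, hbu⟩)
  have hcompact : IsCompact (Icc u b ∩ f ⁻¹' Iic 0) :=
    isCompact_Icc.of_isClosed_subset ((hf.mono (Icc_subset_Icc_left (le_of_lt hau)))
      |>.preimage_isClosed_of_isClosed isClosed_Icc isClosed_Iic) inter_subset_left
  obtain ⟨c, ⟨⟨huc, hcb⟩, hfc⟩, hleast⟩ := hcompact.exists_isLeast ⟨b, ⟨hub, le_rfl⟩, hb⟩
  have hac : a < c := lt_of_lt_of_le hau huc
  have hpos : ∀ t ∈ Ioo a c, 0 < f t := fun t ⟨hat, htc⟩ => by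
    by_contra! hft
    rcases lt_or_ge t u with htu | hut
    · exact hft.not_gt (hu ⟨hat, htu⟩)
    · exact htc.not_ge (hleast ⟨⟨hut, htc.le.trans hcb⟩, hft⟩)
  have hleft : Tendsto f (𝓝[Ioo a c] c) (𝓝 (f c)) :=
    (hf c ⟨hac.le, hcb⟩).mono fun t ht => ⟨ht.1.le, ht.2.le.trans hcb⟩
  rw [nhdsWithin_Ioo_eq_nhdsLT hac] at hleft
  refine ⟨c, ⟨hac, hcb⟩, le_antisymm hfc (ge_of_tendsto hleft ?_), hpos⟩
  filter_upwards [Ioo_mem_nhdsLT hac] with t ht using (hpos t ht).le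

lemma exists_first_zero_of_hasDerivAt (hf : ∀ t, HasDerivAt f (f' t) t) (hab : a < b)
    (ha : f a = 0) (ha' : 0 < f' a) (hb : f b ≤ 0) :
    ∃ c ∈ Ioc a b, f c = 0 ∧ f' c ≤ 0 ∧ ∀ t ∈ Ioo a c, 0 < f t := by
  obtain ⟨c, hc, hfc, hpos⟩ := exists_first_zero (fun t _ => (hf t).continuousAt.continuousWithinAt)
    hab (eventually_nhdsGT_pos_of_hasDerivAt_pos (hf a) ha ha') hb
  refine ⟨c, hc, hfc, not_lt.1 fun hc' => ?_, hpos⟩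
  obtain ⟨t, hneg, ht⟩ := ((eventually_nhdsLT_neg_of_hasDerivAt_pos (hf c) hfc hc').and
    (Ioo_mem_nhdsLT hc.1)).exists
  exact (hpos t ht).not_gt hneg

end FirstZero

/-- Global solutions of Newton's equation `q̈ = -f(q)` on the line, written as a first order system
for the position `q` and the momentum `p`. The system (HS) is the case `f = g'`. -/
structure IsNewtonSol (f q p : ℝ → ℝ) : Prop where
  hasDerivAt_position (t : ℝ) : HasDerivAt q (p t) t
  hasDerivAt_momentum (t : ℝ) : HasDerivAt p (-f (q t)) t

/-- The Wronskian `q₁ p₂ - q₂ p₁` of two phase space curves, which measures how the slopes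
`p₁ / q₁` and `p₂ / q₂` compare. -/
def wronskian (q₁ p₁ q₂ p₂ : ℝ → ℝ) (t : ℝ) : ℝ := q₁ t * p₂ t - q₂ t * p₁ t

namespace IsNewtonSol

variable {f G q p q₁ p₁ q₂ p₂ : ℝ → ℝ} {K : NNReal} {s c T δ : ℝ}

lemma continuous_position (h : IsNewtonSol f q p) : Continuous q :=
  continuous_iff_continuousAt.2 fun t => (h.hasDerivAt_position t).continuousAt

lemma continuous_momentum (h : IsNewtonSol f q p) : Continuous p :=
  continuous_iff_continuousAt.2 fun t => (h.hasDerivAt_momentum t).continuousAt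

lemma neg_comp_add_const (h : IsNewtonSol f q p) (hodd : f.Odd) (c : ℝ) :
    IsNewtonSol f (fun t => -q (t + c)) (fun t => -p (t + c)) where
  hasDerivAt_position t := ((h.hasDerivAt_position (t + c)).comp_add_const t c).neg
  hasDerivAt_momentum t := by
    rw [hodd]
    exact ((h.hasDerivAt_momentum (t + c)).comp_add_const t c).neg

lemma const_of_eq_zero {x : ℝ} (hx : f x = 0) : IsNewtonSol f (fun _ => x) (fun _ => 0) where
  hasDerivAt_position t := hasDerivAt_const t x
  hasDerivAt_momentum t := by simpa only [hx, neg_zero] using hasDerivAt_const t (0 : ℝ)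

theorem unique (hf : LipschitzWith K f) (h₁ : IsNewtonSol f q₁ p₁) (h₂ : IsNewtonSol f q₂ p₂)
    (hq : q₁ s = q₂ s) (hp : p₁ s = p₂ s) : q₁ = q₂ ∧ p₁ = p₂ := by
  have hv : LipschitzWith (max 1 (K * 1)) fun z : ℝ × ℝ => (z.2, -f z.1) :=
    LipschitzWith.prod_snd.prodMk (hf.comp LipschitzWith.prod_fst).neg
  have heq : (fun t => (q₁ t, p₁ t)) = fun t => (q₂ t, p₂ t) :=
    ODE_solution_unique_univ (v := fun _ z => (z.2, -f z.1)) (s := fun _ => univ) (t₀ := s)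
      (fun _ => hv.lipschitzOnWith)
      (fun t => ⟨(h₁.hasDerivAt_position t).prodMk (h₁.hasDerivAt_momentum t), mem_univ _⟩)
      (fun t => ⟨(h₂.hasDerivAt_position t).prodMk (h₂.hasDerivAt_momentum t), mem_univ _⟩)
      (Prod.ext hq hp)
  exact ⟨funext fun t => congrArg Prod.fst (congrFun heq t),
    funext fun t => congrArg Prod.snd (congrFun heq t)⟩

theorem energy_eq (h : IsNewtonSol f q p) (hG : ∀ x, HasDerivAt G (f x) x) (s t : ℝ) :
    p s ^ 2 / 2 + G (q s) = p t ^ 2 / 2 + G (q t) := by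
  have hderiv (t : ℝ) : HasDerivAt (fun t => p t ^ 2 / 2 + G (q t)) 0 t := by
    refine ((((h.hasDerivAt_momentum t).pow 2).div_const 2).add
      ((hG (q t)).comp t (h.hasDerivAt_position t))).congr_deriv ?_
    push_cast
    ring
  exact is_const_of_deriv_eq_zero (fun t => (hderiv t).differentiableAt)
    (fun t => (hderiv t).deriv) s t

theorem momentum_pos (h : IsNewtonSol f q p) (hf : LipschitzWith K f)
    (hG : ∀ x, HasDerivAt G (f x) x) (henergy : ∀ x, G x ≤ p s ^ 2 / 2 + G (q s)) (hp : 0 < p s)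
    (t : ℝ) : 0 < p t := by
  by_contra! ht
  obtain ⟨r, hr⟩ := mem_range_of_exists_le_of_exists_ge h.continuous_momentum ⟨t, ht⟩ ⟨s, hp.le⟩
  have hmax : IsLocalMax G (q r) := Eventually.of_forall fun x => by
    simpa [hr] using (henergy x).trans_eq (h.energy_eq hG s r)
  have hequilibrium := hmax.hasDerivAt_eq_zero (hG (q r))
  have hp_zero : p = fun _ => 0 := (unique hf h (const_of_eq_zero hequilibrium) rfl hr).2
  exact hp.ne' (congrFun hp_zero s)

theorem position_strictMono (h : IsNewtonSol f q p) (hf : LipschitzWith K f)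
    (hG : ∀ x, HasDerivAt G (f x) x) (henergy : ∀ x, G x ≤ p s ^ 2 / 2 + G (q s)) (hp : 0 < p s) :
    StrictMono q :=
  strictMono_of_hasDerivAt_pos h.hasDerivAt_position (h.momentum_pos hf hG henergy hp)

theorem antiperiodic (h : IsNewtonSol f q p) (hf : LipschitzWith K f) (hodd : f.Odd)
    (hq : q c = -q 0) (hp : p c = -p 0) : Function.Antiperiodic q c := fun t => by
  have heq := (unique (s := 0) hf h (h.neg_comp_add_const hodd c) (by simp [hq]) (by simp [hp])).1
  rw [congrFun heq t, neg_neg]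

theorem pos_of_lt_half_period (h : IsNewtonSol f q p) (hf : LipschitzWith K f) (hodd : f.Odd)
    (hG : ∀ x, HasDerivAt G (f x) x) (hq : q 0 = 0) (hp : 0 < p 0) (hT : IsSmallestPeriod q T) :
    ∀ t ∈ Ioo 0 (T / 2), 0 < q t := by
  obtain ⟨hT_pos, hT_periodic, hT_min⟩ := hT
  obtain ⟨c, hc, hqc, hpc, hpos⟩ := exists_first_zero_of_hasDerivAt h.hasDerivAt_position hT_pos hq
    hp (by rw [hT_periodic.eq, hq])
  have hp_neg : p c = -p 0 := by
    have henergy := h.energy_eq hG c 0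
    rw [hqc, hq] at henergy
    rcases sq_eq_sq_iff_eq_or_eq_neg.1 (show p c ^ 2 = p 0 ^ 2 by linarith) with hpc_eq | hpc_neg
    · linarith
    · exact hpc_neg
  have hperiodic : Function.Periodic q (2 * c) :=
    (h.antiperiodic hf hodd (by rw [hqc, hq, neg_zero]) hp_neg).periodic_two_mul
  have hTc := hT_min (2 * c) (by linarith [hc.1]) hperiodic
  exact fun t ht => hpos t ⟨ht.1, by linarith [ht.2]⟩

lemma hasDerivAt_wronskian (h₁ : IsNewtonSol f q₁ p₁) (h₂ : IsNewtonSol f q₂ p₂) (t : ℝ) :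
    HasDerivAt (wronskian q₁ p₁ q₂ p₂) (q₂ t * f (q₁ t) - q₁ t * f (q₂ t)) t := by
  refine (((h₁.hasDerivAt_position t).mul (h₂.hasDerivAt_momentum t)).sub
    ((h₂.hasDerivAt_position t).mul (h₁.hasDerivAt_momentum t))).congr_deriv ?_
  ring

lemma monotoneOn_wronskian (hf : AntitoneOn (fun x => f x / x) (Ioi 0))
    (h₁ : IsNewtonSol f q₁ p₁) (h₂ : IsNewtonSol f q₂ p₂)
    (hpos : ∀ t ∈ Ioo s c, 0 < q₁ t) (hlt : ∀ t ∈ Ioo s c, q₁ t < q₂ t) :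
    MonotoneOn (wronskian q₁ p₁ q₂ p₂) (Icc s c) := by
  have hW := hasDerivAt_wronskian h₁ h₂
  refine monotoneOn_of_hasDerivWithinAt_nonneg (convex_Icc s c)
    (fun t _ => (hW t).continuousAt.continuousWithinAt) (fun t _ => (hW t).hasDerivWithinAt)
    fun t ht => ?_
  rw [interior_Icc] at ht
  have hq₁ := hpos t ht
  have hq₂ := hq₁.trans (hlt t ht)
  have hratio := hf hq₁ hq₂ (hlt t ht).le
  rw [div_le_div_iff₀ hq₂ hq₁] at hratio
  linarith

lemma strictMonoOn_wronskian (hf : StrictAntiOn (fun x => f x / x) (Ioo 0 δ))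
    (h₁ : IsNewtonSol f q₁ p₁) (h₂ : IsNewtonSol f q₂ p₂)
    (hpos : ∀ t ∈ Ioo s c, 0 < q₁ t) (hlt : ∀ t ∈ Ioo s c, q₁ t < q₂ t)
    (hδ : ∀ t ∈ Ioo s c, q₂ t < δ) : StrictMonoOn (wronskian q₁ p₁ q₂ p₂) (Icc s c) := by
  have hW := hasDerivAt_wronskian h₁ h₂
  refine strictMonoOn_of_hasDerivWithinAt_pos (convex_Icc s c)
    (fun t _ => (hW t).continuousAt.continuousWithinAt) (fun t _ => (hW t).hasDerivWithinAt)
    fun t ht => ?_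
  rw [interior_Icc] at ht
  have hq₁ := hpos t ht
  have hq₂ := hq₁.trans (hlt t ht)
  have hratio := hf ⟨hq₁, (hlt t ht).trans (hδ t ht)⟩ ⟨hq₂, hδ t ht⟩ (hlt t ht)
  rw [div_lt_div_iff₀ hq₂ hq₁] at hratio
  linarith

lemma wronskian_pos (hδ : 0 < δ) (hf : AntitoneOn (fun x => f x / x) (Ioi 0))
    (hf' : StrictAntiOn (fun x => f x / x) (Ioo 0 δ))
    (h₁ : IsNewtonSol f q₁ p₁) (h₂ : IsNewtonSol f q₂ p₂) (hq₁ : q₁ 0 = 0) (hq₂ : q₂ 0 = 0)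
    (hc : 0 < c) (hpos : ∀ t ∈ Ioo 0 c, 0 < q₁ t) (hlt : ∀ t ∈ Ioo 0 c, q₁ t < q₂ t) :
    0 < wronskian q₁ p₁ q₂ p₂ c := by
  have hsmall : ∀ᶠ t in 𝓝[>] 0, q₂ t < δ := nhdsWithin_le_nhds
    (h₂.continuous_position.continuousAt.eventually_lt_const (by rwa [hq₂]))
  obtain ⟨ε, ⟨hε, hεc⟩, hεδ⟩ := (mem_nhdsGT_iff_exists_mem_Ioc_Ioo_subset hc).1 hsmall
  have hsub {t : ℝ} (ht : t ∈ Ioo 0 ε) : t ∈ Ioo 0 c := Ioo_subset_Ioo_right hεc ht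
  have hstrict := strictMonoOn_wronskian hf' h₁ h₂ (fun t ht => hpos t (hsub ht))
    (fun t ht => hlt t (hsub ht)) fun t ht => hεδ ht
  calc
    0 = wronskian q₁ p₁ q₂ p₂ 0 := by simp [wronskian, hq₁, hq₂]
    _ < wronskian q₁ p₁ q₂ p₂ ε := hstrict ⟨le_rfl, hε.le⟩ ⟨hε.le, le_rfl⟩ hε
    _ ≤ wronskian q₁ p₁ q₂ p₂ c :=
      monotoneOn_wronskian hf h₁ h₂ hpos hlt ⟨hε.le, hεc⟩ ⟨hc.le, le_rfl⟩ hεc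

theorem position_lt_of_momentum_lt (hδ : 0 < δ) (hf : AntitoneOn (fun x => f x / x) (Ioi 0))
    (hf' : StrictAntiOn (fun x => f x / x) (Ioo 0 δ))
    (h₁ : IsNewtonSol f q₁ p₁) (h₂ : IsNewtonSol f q₂ p₂) (hq₁ : q₁ 0 = 0) (hq₂ : q₂ 0 = 0)
    (hp : p₁ 0 < p₂ 0) (hpos : ∀ t ∈ Ioo 0 T, 0 < q₁ t) : ∀ t ∈ Ioc 0 T, q₁ t < q₂ t := by
  intro t ht
  by_contra! hle
  obtain ⟨c, hc, hqc, hpc, hlt⟩ := exists_first_zero_of_hasDerivAt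
    (f := fun t => q₂ t - q₁ t) (f' := fun t => p₂ t - p₁ t)
    (fun t => (h₂.hasDerivAt_position t).sub (h₁.hasDerivAt_position t)) ht.1
    (by simp [hq₁, hq₂]) (sub_pos.2 hp) (sub_nonpos.2 hle)
  have hpos_c : ∀ r ∈ Ioo 0 c, 0 < q₁ r := fun r hr =>
    hpos r ⟨hr.1, hr.2.trans_le (hc.2.trans ht.2)⟩
  have hq₁c : 0 ≤ q₁ c := by
    refine ge_of_tendsto (h₁.continuous_position.continuousWithinAt (s := Iio c)) ?_
    filter_upwards [Ioo_mem_nhdsLT hc.1] with r hr using (hpos_c r hr).le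
  have hW_pos := wronskian_pos hδ hf hf' h₁ h₂ hq₁ hq₂ hc.1 hpos_c fun r hr => sub_pos.1 (hlt r hr)
  have hW_nonpos : wronskian q₁ p₁ q₂ p₂ c ≤ 0 := by
    rw [wronskian, sub_eq_zero.1 hqc, ← mul_sub]
    exact mul_nonpos_of_nonneg_of_nonpos hq₁c hpc
  exact hW_nonpos.not_gt hW_pos

end IsNewtonSol

lemma g_eq_one_sub_max_pow (x : ℝ) : g x = 1 - max (1 - x ^ 2) 0 ^ 4 := by
  simp only [g, ← sq_le_one_iff_abs_le_one]
  split_ifs with hx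
  · rw [max_eq_left (sub_nonneg.2 hx)]
  · rw [max_eq_right (by linarith)]
    norm_num

lemma g'_eq_mul_max_pow (x : ℝ) : g' x = 8 * x * max (1 - x ^ 2) 0 ^ 3 := by
  simp only [g', ← sq_le_one_iff_abs_le_one]
  split_ifs with hx
  · rw [max_eq_left (sub_nonneg.2 hx)]
  · rw [max_eq_right (by linarith)]
    norm_num

lemma hasDerivAt_g (x : ℝ) : HasDerivAt g (g' x) x := by
  rw [funext g_eq_one_sub_max_pow]
  refine (((hasDerivAt_max_zero_pow 2 (1 - x ^ 2)).comp x
    ((hasDerivAt_pow 2 x).const_sub 1)).const_sub 1).congr_deriv ?_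
  rw [g'_eq_mul_max_pow]
  push_cast
  ring

lemma g_zero : g 0 = 0 := by norm_num [g]

lemma g_le_one (x : ℝ) : g x ≤ 1 := by
  rw [g_eq_one_sub_max_pow, sub_le_self_iff]
  positivity

lemma g'_odd : g'.Odd := fun x => by
  rw [g'_eq_mul_max_pow, g'_eq_mul_max_pow, neg_sq]
  ring

lemma g'_eq_projIcc (x : ℝ) :
    g' x = 8 * (projIcc (-1) 1 (by norm_num) x : ℝ) *
      (1 - (projIcc (-1) 1 (by norm_num) x : ℝ) ^ 2) ^ 3 := by
  rw [g']
  split_ifs with hx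
  · rw [projIcc_of_mem _ (abs_le.1 hx)]
  · rcases lt_abs.1 (not_le.1 hx) with hx | hx
    · rw [projIcc_of_right_le _ hx.le]
      norm_num
    · rw [projIcc_of_le_left _ (by linarith)]
      norm_num

lemma exists_lipschitzWith_g' : ∃ K, LipschitzWith K g' := by
  have hpoly : ContDiffOn ℝ 1 (fun x : ℝ => 8 * x * (1 - x ^ 2) ^ 3) (Icc (-1) 1) := by fun_prop
  obtain ⟨K, hK⟩ := hpoly.exists_lipschitzOnWith one_ne_zero (convex_Icc _ _) isCompact_Icc
  refine ⟨K * 1, ?_⟩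
  rw [funext g'_eq_projIcc]
  exact hK.to_restrict.comp (LipschitzWith.projIcc _)

lemma g'_div_self {x : ℝ} (hx : 0 < x) : g' x / x = 8 * max (1 - x ^ 2) 0 ^ 3 := by
  rw [g'_eq_mul_max_pow]
  field_simp

lemma antitoneOn_g'_div_self : AntitoneOn (fun x => g' x / x) (Ioi 0) := fun x hx y hy hxy => by
  have hx : 0 < x := hx
  simp only [g'_div_self hx, g'_div_self hy]
  gcongr

lemma strictAntiOn_g'_div_self : StrictAntiOn (fun x => g' x / x) (Ioo 0 1) :=
  fun x hx y hy hxy => by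
    have hx_sq : x ^ 2 < y ^ 2 := pow_lt_pow_left₀ hxy hx.1.le two_ne_zero
    have hy_sq : y ^ 2 < 1 := pow_lt_one₀ hy.1.le hy.2 two_ne_zero
    simp only [g'_div_self hx.1, g'_div_self hy.1]
    rw [max_eq_left (by linarith), max_eq_left (by linarith)]
    have hpow := pow_lt_pow_left₀ (sub_lt_sub_left hx_sq 1) (sub_nonneg.2 hy_sq.le) three_ne_zero
    linarith

namespace IsHSSol

variable {q p : ℝ → ℝ} {T : ℝ}

lemma isNewtonSol (h : IsHSSol q p) : IsNewtonSol g' q p := ⟨h.1, h.2⟩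

theorem pos_of_lt_half_period (h : IsHSSol q p) (hq : q 0 = 0) (hp : 0 < p 0)
    (hT : IsSmallestPeriod q T) : ∀ t ∈ Ioo 0 (T / 2), 0 < q t := by
  obtain ⟨K, hK⟩ := exists_lipschitzWith_g'
  exact h.isNewtonSol.pos_of_lt_half_period hK g'_odd hasDerivAt_g hq hp hT

theorem pos_of_sqrt_two_le (h : IsHSSol q p) (hq : q 0 = 0) (hp : √2 ≤ p 0) {t : ℝ} (ht : 0 < t) :
    0 < q t := by
  obtain ⟨K, hK⟩ := exists_lipschitzWith_g'
  have henergy (x : ℝ) : g x ≤ p 0 ^ 2 / 2 + g (q 0) := by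
    have hp_sq : 2 ≤ p 0 ^ 2 := (sqrt_le_left ((sqrt_nonneg 2).trans hp)).1 hp
    rw [hq, g_zero]
    linarith [g_le_one x]
  have hmono := h.isNewtonSol.position_strictMono hK hasDerivAt_g henergy
    ((sqrt_pos.2 two_pos).trans_le hp)
  exact hq ▸ hmono ht

end IsHSSol

theorem stmt_7_general {q p qt pt : ℝ → ℝ} (hsol : IsHSSol q p) (hsolt : IsHSSol qt pt)
    (hq : q 0 = 0) (hqt : qt 0 = 0) (hp : 0 < p 0) (hpt : p 0 < pt 0) :
    (∀ T : ℝ, IsSmallestPeriod q T → ∀ t ∈ Ioc (0 : ℝ) (T / 2), q t < qt t) ∧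
    (√2 ≤ p 0 → ∀ t : ℝ, 0 < t → q t < qt t) := by
  have hcompare (b : ℝ) (hpos : ∀ t ∈ Ioo 0 b, 0 < q t) : ∀ t ∈ Ioc 0 b, q t < qt t :=
    IsNewtonSol.position_lt_of_momentum_lt one_pos antitoneOn_g'_div_self strictAntiOn_g'_div_self
      hsol.isNewtonSol hsolt.isNewtonSol hq hqt hpt hpos
  constructor
  · exact fun T hT => hcompare (T / 2) (hsol.pos_of_lt_half_period hq hp hT)
  · exact fun hsqrt t ht =>
      hcompare t (fun s hs => hsol.pos_of_sqrt_two_le hq hsqrt hs.1) t ⟨ht, le_rfl⟩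

/-- Lemma ce4: for `0 < p₀ < p̃₀ < 2`, with `(q, p)` and `(q̃, p̃)` the solutions of (HS)
with data `(0, p₀)` and `(0, p̃₀)`: (i) if `p₀ ∈ (0, √2)` then `q(t) < q̃(t)` for all
`t ∈ (0, 𝒯(p₀)/2]`; (ii) if `p₀ ∈ [√2, 2)` then `q(t) < q̃(t)` for all `t > 0`. -/
theorem stmt_7 (p₀ pt₀ : ℝ) (h0 : 0 < p₀) (h1 : p₀ < pt₀) (h2 : pt₀ < 2)
    (q p qt pt : ℝ → ℝ)
    (hsol : IsHSSol q p) (hq0 : q 0 = 0) (hp0 : p 0 = p₀)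
    (hsolt : IsHSSol qt pt) (hqt0 : qt 0 = 0) (hpt0 : pt 0 = pt₀) :
    (∀ T : ℝ, p₀ < Real.sqrt 2 → IsSmallestPeriod q T →
      ∀ t ∈ Ioc (0:ℝ) (T / 2), q t < qt t) ∧
    (Real.sqrt 2 ≤ p₀ → ∀ t : ℝ, 0 < t → q t < qt t) := by
  subst hp0 hpt0
  have hgeneral := stmt_7_general hsol hsolt hq0 hqt0 h0 h1
  exact ⟨fun T _ => hgeneral.1 T, hgeneral.2⟩
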